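/- arXiv:math-ph/0303021 — 4 statements merged into one kernel-verified Lean document; each statement's English description precedes it below -/
import Mathlib

section
/- Fix j with 0 ≤ j ≤ n. Let ρ be a C^∞ everywhere positive function on X with L^T ρ = 0 and ∫_X ρ dx = 1, let μ = ρ dx, and define F(p,q,r₁,rₙ) = −R_j(p,q,r₁,rₙ) − log ρ(−p,q,r₁,rₙ). Assume that L F and each |∇_{r_i} F|², i ∈ {1,n}, are μ-integrable and that ∫ (L F) dμ = 0. Then the mean entropy production in the stationary state is nonnegative: ∫ σ_j dμ = γ Σ_{i∈{1,n}} T_i ∫ |∇_{r_i} F|² dμ ≥ 0. -/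
open scoped BigOperators

noncomputable section

/-- `Vc d` : vectors in ℝ^d. -/
abbrev Vc (d : ℕ) := Fin d → ℝ
/-- Configurations of `m` oscillators. -/
abbrev Cfg (m d : ℕ) := Fin m → Vc d
/-- Phase space X = p × q × r₁ × rₙ (for a chain of `m` oscillators). -/
abbrev Phs (m d : ℕ) := Cfg m d × Cfg m d × Vc d × Vc d

variable {m d : ℕ}

/-- unit coordinate vector in the p-block -/
def eP (i : Fin m) (a : Fin d) : Phs m d := (Pi.single i (Pi.single a 1), 0, 0, 0)
/-- unit coordinate vector in the q-block -/
def eQ (i : Fin m) (a : Fin d) : Phs m d := (0, Pi.single i (Pi.single a 1), 0, 0)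
/-- unit coordinate vector in the r₁-block -/
def eR1 (a : Fin d) : Phs m d := (0, 0, Pi.single a 1, 0)
/-- unit coordinate vector in the rₙ-block -/
def eRn (a : Fin d) : Phs m d := (0, 0, 0, Pi.single a 1)

/-- directional (partial) derivative -/
def PD (f : Phs m d → ℝ) (x v : Phs m d) : ℝ := fderiv ℝ f x v

variable {n : ℕ}

/-- total potential V(q) = Σᵢ U⁽¹⁾(qᵢ) + Σᵢ U⁽²⁾(qᵢ − qᵢ₊₁) of a chain of n+2 oscillators -/
def Vtot (U1 U2 : Vc d → ℝ) (q : Cfg (n+2) d) : ℝ :=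
  (∑ i, U1 (q i)) + ∑ i : Fin (n+1), U2 (q i.castSucc - q i.succ)

/-- the generator L of the dynamics of the chain coupled to two reservoirs -/
def gen (γ lam T1 Tn : ℝ) (U1 U2 : Vc d → ℝ) (f : Phs (n+2) d → ℝ) (x : Phs (n+2) d) : ℝ :=
  (γ * (T1 * ∑ a, PD (fun y => PD f y (eR1 a)) x (eR1 a)
        - ∑ a, x.2.2.1 a * PD f x (eR1 a))
    + lam * ((∑ a, x.1 0 a * PD f x (eR1 a)) - ∑ a, x.2.2.1 a * PD f x (eP 0 a)))
  + (γ * (Tn * ∑ a, PD (fun y => PD f y (eRn a)) x (eRn a)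
        - ∑ a, x.2.2.2 a * PD f x (eRn a))
    + lam * ((∑ a, x.1 (Fin.last (n+1)) a * PD f x (eRn a))
        - ∑ a, x.2.2.2 a * PD f x (eP (Fin.last (n+1)) a)))
  + ∑ i, ((∑ a, x.1 i a * PD f x (eQ i a))
        - ∑ a, fderiv ℝ (Vtot U1 U2) x.2.1 (Pi.single i (Pi.single a 1)) * PD f x (eP i a))

/-- the formal adjoint Lᵀ of L with respect to Lebesgue measure -/
def genT (γ lam T1 Tn : ℝ) (U1 U2 : Vc d → ℝ) (g : Phs (n+2) d → ℝ) (x : Phs (n+2) d) : ℝ :=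
  (γ * (T1 * ∑ a, PD (fun y => PD g y (eR1 a)) x (eR1 a)
        + ∑ a, PD (fun y => y.2.2.1 a * g y) x (eR1 a))
    - lam * ((∑ a, x.1 0 a * PD g x (eR1 a)) - ∑ a, x.2.2.1 a * PD g x (eP 0 a)))
  + (γ * (Tn * ∑ a, PD (fun y => PD g y (eRn a)) x (eRn a)
        + ∑ a, PD (fun y => y.2.2.2 a * g y) x (eRn a))
    - lam * ((∑ a, x.1 (Fin.last (n+1)) a * PD g x (eRn a))
        - ∑ a, x.2.2.2 a * PD g x (eP (Fin.last (n+1)) a)))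
  - ∑ i, ((∑ a, x.1 i a * PD g x (eQ i a))
        - ∑ a, fderiv ℝ (Vtot U1 U2) x.2.1 (Pi.single i (Pi.single a 1)) * PD g x (eP i a))

/-- time reversal (Jf)(p,q,r₁,rₙ) = f(−p,q,r₁,rₙ) -/
def Jop (f : Phs m d → ℝ) : Phs m d → ℝ := fun x => f (-x.1, x.2.1, x.2.2.1, x.2.2.2)

/-- nat-indexed access to the oscillator coordinates (junk value outside the range) -/
def cfgNat (q : Cfg (n+2) d) (k : ℕ) : Vc d := if h : k < n + 2 then q ⟨k, h⟩ else 0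

/-- local energies H_k, 0-indexed: k ∈ {0, …, n+1} -/
def Hloc (U1 U2 : Vc d → ℝ) (k : ℕ) (x : Phs (n+2) d) : ℝ :=
  (∑ a, (cfgNat x.1 k a) ^ 2) / 2 + U1 (cfgNat x.2.1 k)
  + (if k = 0 then 0 else (1/2) * U2 (cfgNat x.2.1 (k-1) - cfgNat x.2.1 k))
  + (if k = n + 1 then 0 else (1/2) * U2 (cfgNat x.2.1 k - cfgNat x.2.1 (k+1)))

/-- heat flows Φ_j, j ∈ {0, …, n+2}: Φ_0 = −λr₁·p_0 is the flow from the left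
reservoir into the chain, Φ_{n+2} = λrₙ·p_{n+1} the flow into the right reservoir,
and for 1 ≤ j ≤ n+1, Φ_j is the flow from the (0-indexed) oscillator j−1 to the
oscillator j. -/
def heatFlow (lam : ℝ) (U2 : Vc d → ℝ) (j : ℕ) (x : Phs (n+2) d) : ℝ :=
  if j = 0 then - lam * ∑ a, x.2.2.1 a * x.1 0 a
  else if j = n + 2 then lam * ∑ a, x.2.2.2 a * x.1 (Fin.last (n+1)) a
  else ∑ a, ((cfgNat x.1 (j-1) a + cfgNat x.1 j a) / 2)
        * fderiv ℝ U2 (cfgNat x.2.1 (j-1) - cfgNat x.2.1 j) (Pi.single a 1)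

/-- entropy production σ_j = (1/Tₙ − 1/T₁) Φ_j -/
def sigmaEP (lam T1 Tn : ℝ) (U2 : Vc d → ℝ) (j : ℕ) (x : Phs (n+2) d) : ℝ :=
  (1 / Tn - 1 / T1) * heatFlow lam U2 j x

/-- two-temperatures Gibbs exponent R_j, j ∈ {0, …, n+2}: the first j oscillators
are weighted with 1/T₁, the remaining ones with 1/Tₙ. -/
def Rj (T1 Tn : ℝ) (U1 U2 : Vc d → ℝ) (j : ℕ) (x : Phs (n+2) d) : ℝ :=
  (1 / T1) * ((∑ a, (x.2.2.1 a) ^ 2) / 2 + ∑ k ∈ Finset.range j, Hloc U1 U2 k x)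
  + (1 / Tn) * ((∑ k ∈ Finset.Ico j (n+2), Hloc U1 U2 k x) + (∑ a, (x.2.2.2 a) ^ 2) / 2)

open MeasureTheory

lemma lin_sum (L : Vc d →L[ℝ] ℝ) (v : Vc d) : ∑ a, v a * L (Pi.single a 1) = L v := by
  have h := L.toLinearMap.pi_apply_eq_sum_univ v
  simp only [ContinuousLinearMap.coe_coe, smul_eq_mul] at h
  rw [h]
  refine Finset.sum_congr rfl fun a _ => ?_
  congr 2
  ext b
  simp [Pi.single_apply, eq_comm]

lemma lin_sum2 (L : Cfg m d →L[ℝ] ℝ) (v : Cfg m d) :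
    ∑ i, ∑ a, v i a * L (Pi.single i (Pi.single a 1)) = L v := by
  have h : ∀ i, ∑ a, v i a * L (Pi.single i (Pi.single a 1)) = L (Pi.single i (v i)) := fun i =>
    lin_sum (L.comp (ContinuousLinearMap.single ℝ (fun _ : Fin m => Vc d) i)) (v i)
  simp_rw [h, ← map_sum]
  rw [Finset.univ_sum_single]

lemma lin_phs (L : Phs m d →L[ℝ] ℝ) (v : Phs m d) :
    L v = ∑ i, ∑ a, v.1 i a * L (eP i a) + ∑ i, ∑ a, v.2.1 i a * L (eQ i a)
      + ∑ a, v.2.2.1 a * L (eR1 a) + ∑ a, v.2.2.2 a * L (eRn a) := by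
  have e : v = (v.1, 0, 0, 0) + (0, v.2.1, 0, 0) + (0, 0, v.2.2.1, 0) + (0, 0, 0, v.2.2.2) := by
    ext <;> simp
  conv_lhs => rw [e]
  rw [map_add, map_add, map_add]
  congr 1
  · congr 1
    · congr 1
      · exact (lin_sum2 (L.comp (ContinuousLinearMap.inl ℝ (Cfg m d) (Cfg m d × Vc d × Vc d))) v.1).symm
      · exact (lin_sum2 (L.comp ((ContinuousLinearMap.inr ℝ (Cfg m d) (Cfg m d × Vc d × Vc d)).comp
          (ContinuousLinearMap.inl ℝ (Cfg m d) (Vc d × Vc d)))) v.2.1).symm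
    · exact (lin_sum (L.comp ((ContinuousLinearMap.inr ℝ (Cfg m d) (Cfg m d × Vc d × Vc d)).comp
          ((ContinuousLinearMap.inr ℝ (Cfg m d) (Vc d × Vc d)).comp
          (ContinuousLinearMap.inl ℝ (Vc d) (Vc d))))) v.2.2.1).symm
  · exact (lin_sum (L.comp ((ContinuousLinearMap.inr ℝ (Cfg m d) (Cfg m d × Vc d × Vc d)).comp
          ((ContinuousLinearMap.inr ℝ (Cfg m d) (Vc d × Vc d)).comp
          (ContinuousLinearMap.inr ℝ (Vc d) (Vc d))))) v.2.2.2).symm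

/-- Hamiltonian vector field including the coupling to the reservoirs -/
def Wf (lam : ℝ) (U1 U2 : Vc d → ℝ) (x : Phs (n+2) d) : Phs (n+2) d :=
  (fun i a => - fderiv ℝ (Vtot U1 U2) x.2.1 (Pi.single i (Pi.single a 1))
      - (if i = 0 then lam * x.2.2.1 a else 0) - (if i = Fin.last (n+1) then lam * x.2.2.2 a else 0),
    x.1, lam • x.1 0, lam • x.1 (Fin.last (n+1)))

lemma PD_Wf (lam : ℝ) (U1 U2 : Vc d → ℝ) (f : Phs (n+2) d → ℝ) (x : Phs (n+2) d) :
    PD f x (Wf lam U1 U2 x) =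
    lam * ((∑ a, x.1 0 a * PD f x (eR1 a)) - ∑ a, x.2.2.1 a * PD f x (eP 0 a))
    + lam * ((∑ a, x.1 (Fin.last (n+1)) a * PD f x (eRn a))
        - ∑ a, x.2.2.2 a * PD f x (eP (Fin.last (n+1)) a))
    + ∑ i, ((∑ a, x.1 i a * PD f x (eQ i a))
        - ∑ a, fderiv ℝ (Vtot U1 U2) x.2.1 (Pi.single i (Pi.single a 1)) * PD f x (eP i a)) := by
  unfold PD
  rw [lin_phs (fderiv ℝ f x) (Wf lam U1 U2 x)]
  simp only [Wf, sub_mul, Finset.sum_sub_distrib, ite_mul, zero_mul, Pi.smul_apply, smul_eq_mul,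
    neg_mul, Finset.sum_neg_distrib, mul_sub, Finset.mul_sum]
  have h : ∀ (k : Fin (n+2)) (g : Fin (n+2) → Fin d → ℝ),
      ∑ i, ∑ a, (if i = k then g i a else 0) = ∑ a, g k a := by
    intro k g
    rw [Finset.sum_comm]
    simp
  rw [h 0, h (Fin.last (n+1))]
  simp only [mul_assoc]
  ring

/-- time reversal as a linear map -/
def Jl (m d : ℕ) : Phs m d →L[ℝ] Phs m d :=
  (-ContinuousLinearMap.fst ℝ (Cfg m d) (Cfg m d × Vc d × Vc d)).prod
    (ContinuousLinearMap.snd ℝ (Cfg m d) (Cfg m d × Vc d × Vc d))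

lemma Jl_apply (x : Phs m d) : Jl m d x = (-x.1, x.2.1, x.2.2.1, x.2.2.2) := rfl

lemma Jl_Jl (x : Phs m d) : Jl m d (Jl m d x) = x := by
  simp [Jl_apply]

lemma PD_J {h : Phs m d → ℝ} (hh : Differentiable ℝ h) (x v : Phs m d) :
    PD (fun y => h (Jl m d y)) x v = PD h (Jl m d x) (Jl m d v) := by
  unfold PD
  have := ((hh (Jl m d x)).hasFDerivAt.comp x (Jl m d).hasFDerivAt).fderiv
  rw [show (fun y => h (Jl m d y)) = h ∘ Jl m d from rfl, this]
  rfl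

lemma PD_exp {G : Phs m d → ℝ} (hG : Differentiable ℝ G) (x v : Phs m d) :
    PD (fun y => Real.exp (G y)) x v = Real.exp (G x) * PD G x v := by
  unfold PD
  rw [(hG x).hasFDerivAt.exp.fderiv]
  rfl

lemma PD_diff {G : Phs m d → ℝ} (hG : ContDiff ℝ (⊤ : ℕ∞) G) (v : Phs m d) :
    Differentiable ℝ (fun y => PD G y v) := by
  unfold PD
  have : ContDiff ℝ 1 (fderiv ℝ G) := hG.fderiv_right (by norm_cast)
  exact (this.differentiable (by simp)).clm_apply (differentiable_const v)

lemma PD_PD_exp {G : Phs m d → ℝ} (hG : ContDiff ℝ (⊤ : ℕ∞) G) (x v : Phs m d) :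
    PD (fun y => PD (fun y => Real.exp (G y)) y v) x v
      = Real.exp (G x) * (PD (fun y => PD G y v) x v + (PD G x v)^2) := by
  have hd := hG.differentiable (by simp)
  simp_rw [PD_exp hd]
  have h2 := PD_diff hG v x
  have := ((hd x).hasFDerivAt.exp.mul h2.hasFDerivAt).fderiv
  conv_lhs => unfold PD
  change fderiv ℝ ((fun y => Real.exp (G y)) * fun y => PD G y v) x v = _
  rw [this]
  simp only [add_apply, smul_apply, smul_eq_mul]
  simp only [PD]
  ring

/-- coordinate functional -/
def rl1 (m : ℕ) (a : Fin d) : Phs m d →L[ℝ] ℝ :=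
  (ContinuousLinearMap.proj a).comp ((ContinuousLinearMap.fst ℝ (Vc d) (Vc d)).comp
    ((ContinuousLinearMap.snd ℝ (Cfg m d) (Vc d × Vc d)).comp
    (ContinuousLinearMap.snd ℝ (Cfg m d) (Cfg m d × Vc d × Vc d))))

lemma PD_r1 {g : Phs m d → ℝ} (hg : Differentiable ℝ g) (x : Phs m d) (a : Fin d) :
    PD (fun y => y.2.2.1 a * g y) x (eR1 a) = g x + x.2.2.1 a * PD g x (eR1 a) := by
  have h1 : HasFDerivAt (fun y : Phs m d => rl1 m a y) (rl1 m a) x := (rl1 m a).hasFDerivAt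
  have h2 : HasFDerivAt (fun y : Phs m d => rl1 m a y * g y) _ x := h1.fun_mul (hg x).hasFDerivAt
  change fderiv ℝ (fun y : Phs m d => rl1 m a y * g y) x _ = _
  rw [h2.fderiv]
  simp [eR1, rl1, PD]
  ring

/-- coordinate functional -/
def rln (m : ℕ) (a : Fin d) : Phs m d →L[ℝ] ℝ :=
  (ContinuousLinearMap.proj a).comp ((ContinuousLinearMap.snd ℝ (Vc d) (Vc d)).comp
    ((ContinuousLinearMap.snd ℝ (Cfg m d) (Vc d × Vc d)).comp
    (ContinuousLinearMap.snd ℝ (Cfg m d) (Cfg m d × Vc d × Vc d))))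

lemma PD_rn {g : Phs m d → ℝ} (hg : Differentiable ℝ g) (x : Phs m d) (a : Fin d) :
    PD (fun y => y.2.2.2 a * g y) x (eRn a) = g x + x.2.2.2 a * PD g x (eRn a) := by
  have h1 : HasFDerivAt (fun y : Phs m d => rln m a y) (rln m a) x := (rln m a).hasFDerivAt
  have h2 : HasFDerivAt (fun y : Phs m d => rln m a y * g y) _ x := h1.fun_mul (hg x).hasFDerivAt
  change fderiv ℝ (fun y : Phs m d => rln m a y * g y) x _ = _
  rw [h2.fderiv]
  simp [eRn, rln, PD]
  ring

lemma gen_eq (γ lam T1 Tn : ℝ) (U1 U2 : Vc d → ℝ) (f : Phs (n+2) d → ℝ) (x : Phs (n+2) d) :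
    gen γ lam T1 Tn U1 U2 f x =
    γ * (T1 * ∑ a, PD (fun y => PD f y (eR1 a)) x (eR1 a) - ∑ a, x.2.2.1 a * PD f x (eR1 a))
    + γ * (Tn * ∑ a, PD (fun y => PD f y (eRn a)) x (eRn a) - ∑ a, x.2.2.2 a * PD f x (eRn a))
    + PD f x (Wf lam U1 U2 x) := by
  rw [PD_Wf, gen]
  ring

lemma genT_eq (γ lam T1 Tn : ℝ) (U1 U2 : Vc d → ℝ) (h : Phs (n+2) d → ℝ)
    (hh : ContDiff ℝ (⊤ : ℕ∞) h) (x : Phs (n+2) d) :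
    genT γ lam T1 Tn U1 U2 (fun y => h (Jl _ _ y)) (Jl _ _ x) =
    γ * (T1 * ∑ a, PD (fun y => PD h y (eR1 a)) x (eR1 a)
      + ∑ a, (h x + x.2.2.1 a * PD h x (eR1 a)))
    + γ * (Tn * ∑ a, PD (fun y => PD h y (eRn a)) x (eRn a)
      + ∑ a, (h x + x.2.2.2 a * PD h x (eRn a)))
    + PD h x (Wf lam U1 U2 x) := by
  have hd := hh.differentiable (by simp)
  have hdJ : Differentiable ℝ (fun y => h (Jl (n+2) d y)) := hd.comp (Jl (n+2) d).differentiable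
  have e1 : ∀ a, Jl (n+2) d (eR1 a) = eR1 a := fun a => by simp [Jl_apply, eR1]
  have e2 : ∀ a, Jl (n+2) d (eRn a) = eRn a := fun a => by simp [Jl_apply, eRn]
  have e3 : ∀ i a, Jl (n+2) d (eQ i a) = eQ i a := fun i a => by simp [Jl_apply, eQ]
  have e4 : ∀ i a, Jl (n+2) d (eP i a) = -eP i a := fun i a => by simp [Jl_apply, eP]
  have e5 : ∀ i a, PD h x (-eP i a) = - PD h x (eP i a) := fun i a => by simp [PD]
  have f1 : ∀ a, PD (fun y => PD (fun y => h (Jl _ _ y)) y (eR1 a)) (Jl _ _ x) (eR1 a)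
      = PD (fun y => PD h y (eR1 a)) x (eR1 a) := by
    intro a
    simp_rw [PD_J hd, e1]
    rw [PD_J (h := fun y => PD h y (eR1 a)) (PD_diff hh (eR1 a)), Jl_Jl, e1]
  have f2 : ∀ a, PD (fun y => PD (fun y => h (Jl _ _ y)) y (eRn a)) (Jl _ _ x) (eRn a)
      = PD (fun y => PD h y (eRn a)) x (eRn a) := by
    intro a
    simp_rw [PD_J hd, e2]
    rw [PD_J (h := fun y => PD h y (eRn a)) (PD_diff hh (eRn a)), Jl_Jl, e2]
  have f3 : ∀ a, PD (fun y => y.2.2.1 a * h (Jl _ _ y)) (Jl _ _ x) (eR1 a)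
      = h x + x.2.2.1 a * PD h x (eR1 a) := by
    intro a
    rw [PD_r1 hdJ, PD_J hd, Jl_Jl, e1]; rfl
  have f4 : ∀ a, PD (fun y => y.2.2.2 a * h (Jl _ _ y)) (Jl _ _ x) (eRn a)
      = h x + x.2.2.2 a * PD h x (eRn a) := by
    intro a
    rw [PD_rn hdJ, PD_J hd, Jl_Jl, e2]; rfl
  rw [PD_Wf, genT]
  simp_rw [f1, f2, f3, f4, PD_J hd, Jl_Jl, e1, e2, e3, e4, e5]
  simp only [Jl_apply, Pi.neg_apply, neg_mul, mul_neg, Finset.sum_neg_distrib,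
    Finset.sum_sub_distrib]
  ring

/-- `cfgNat` as a linear map -/
def cN (n d k : ℕ) : Cfg (n+2) d →L[ℝ] Vc d :=
  if h : k < n + 2 then ContinuousLinearMap.proj ⟨k, h⟩ else 0

lemma cfgNat_eq (q : Cfg (n+2) d) (k : ℕ) : cfgNat q k = cN n d k q := by
  unfold cfgNat cN
  split_ifs <;> rfl

lemma cN_fin (q : Cfg (n+2) d) (i : Fin (n+2)) : cN n d i q = q i := by
  simp [cN]

lemma hasDerivAt_line {f : Phs m d → ℝ} (hf : Differentiable ℝ f) (x v : Phs m d) :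
    HasDerivAt (fun t : ℝ => f (x + t • v)) (PD f x v) 0 :=
  (hf x).hasFDerivAt.hasLineDerivAt v

lemma hasDerivAt_comp_line {E : Type*} [NormedAddCommGroup E] [NormedSpace ℝ E]
    {U : E → ℝ} (hU : Differentiable ℝ U) (q v : E) :
    HasDerivAt (fun t : ℝ => U (q + t • v)) (fderiv ℝ U q v) 0 :=
  (hU q).hasFDerivAt.hasLineDerivAt v

lemma Hloc_smooth {U1 U2 : Vc d → ℝ} (hU1 : ContDiff ℝ (⊤ : ℕ∞) U1)
    (hU2 : ContDiff ℝ (⊤ : ℕ∞) U2) (k : ℕ) :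
    ContDiff ℝ (⊤ : ℕ∞) (fun x : Phs (n+2) d => Hloc U1 U2 k x) := by
  unfold Hloc
  simp only [cfgNat_eq]
  split_ifs <;> fun_prop

lemma Rj_smooth (T1 Tn : ℝ) {U1 U2 : Vc d → ℝ} (hU1 : ContDiff ℝ (⊤ : ℕ∞) U1)
    (hU2 : ContDiff ℝ (⊤ : ℕ∞) U2) (j : ℕ) :
    ContDiff ℝ (⊤ : ℕ∞) (fun x : Phs (n+2) d => Rj T1 Tn U1 U2 j x) := by
  unfold Rj
  have := fun k => Hloc_smooth (n := n) hU1 hU2 k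
  fun_prop

lemma hasDerivAt_sq (u w : Vc d) :
    HasDerivAt (fun t : ℝ => (∑ a, ((u + t • w) a)^2) / 2) (∑ a, u a * w a) 0 := by
  have h : ∀ a ∈ Finset.univ, HasDerivAt (fun t : ℝ => ((u + t • w) a)^2) (2 * (u a * w a)) 0 := by
    intro a _
    have h1 : HasDerivAt (fun t : ℝ => u a + t * w a)
        (1 * w a) 0 := ((hasDerivAt_id (0:ℝ)).mul_const _).const_add _
    have h2 := h1.fun_pow 2
    exact h2.congr_deriv (by simp; ring)
  have := (HasDerivAt.fun_sum h).div_const 2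
  exact this.congr_deriv (by rw [← Finset.mul_sum]; ring)

lemma PD_Hloc {U1 U2 : Vc d → ℝ} (hU1 : ContDiff ℝ (⊤ : ℕ∞) U1)
    (hU2 : ContDiff ℝ (⊤ : ℕ∞) U2) (k : ℕ) (x v : Phs (n+2) d) :
    PD (Hloc U1 U2 k) x v = (∑ a, cfgNat x.1 k a * cfgNat v.1 k a)
      + fderiv ℝ U1 (cfgNat x.2.1 k) (cfgNat v.2.1 k)
      + (if k = 0 then 0 else (1/2) * fderiv ℝ U2 (cfgNat x.2.1 (k-1) - cfgNat x.2.1 k)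
          (cfgNat v.2.1 (k-1) - cfgNat v.2.1 k))
      + (if k = n + 1 then 0 else (1/2) * fderiv ℝ U2 (cfgNat x.2.1 k - cfgNat x.2.1 (k+1))
          (cfgNat v.2.1 k - cfgNat v.2.1 (k+1))) := by
  have h0 := hasDerivAt_line ((Hloc_smooth (n := n) hU1 hU2 k).differentiable (by simp)) x v
  refine h0.unique ?_
  have d1 := hU1.differentiable (by simp)
  have d2 := hU2.differentiable (by simp)
  unfold Hloc
  simp only [cfgNat_eq, Prod.fst_add, Prod.snd_add, Prod.smul_fst, Prod.smul_snd, map_add, map_smul,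
    add_sub_add_comm, ← smul_sub]
  refine HasDerivAt.fun_add (HasDerivAt.fun_add (HasDerivAt.fun_add ?_ ?_) ?_) ?_
  · exact hasDerivAt_sq _ _
  · exact hasDerivAt_comp_line d1 _ _
  · split_ifs
    · exact hasDerivAt_const _ _
    · exact (hasDerivAt_comp_line d2 _ _).const_mul _
  · split_ifs
    · exact hasDerivAt_const _ _
    · exact (hasDerivAt_comp_line d2 _ _).const_mul _

lemma fderiv_Vtot {U1 U2 : Vc d → ℝ} (hU1 : ContDiff ℝ (⊤ : ℕ∞) U1)
    (hU2 : ContDiff ℝ (⊤ : ℕ∞) U2) (q v : Cfg (n+2) d) :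
    fderiv ℝ (Vtot U1 U2) q v = (∑ i, fderiv ℝ U1 (q i) (v i))
      + ∑ i : Fin (n+1), fderiv ℝ U2 (q i.castSucc - q i.succ) (v i.castSucc - v i.succ) := by
  have d1 := hU1.differentiable (by simp)
  have d2 := hU2.differentiable (by simp)
  have hV : Differentiable ℝ (fun q : Cfg (n+2) d => Vtot U1 U2 q) := by
    unfold Vtot; fun_prop
  refine (hasDerivAt_comp_line hV q v).unique ?_
  unfold Vtot
  simp only [Pi.add_apply, Pi.smul_apply, add_sub_add_comm, ← smul_sub]
  exact (HasDerivAt.fun_sum fun i _ => hasDerivAt_comp_line d1 _ _).fun_add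
    (HasDerivAt.fun_sum fun i _ => hasDerivAt_comp_line d2 _ _)

lemma fderiv_Vtot_single {U1 U2 : Vc d → ℝ} (hU1 : ContDiff ℝ (⊤ : ℕ∞) U1)
    (hU2 : ContDiff ℝ (⊤ : ℕ∞) U2) (q : Cfg (n+2) d) (k : Fin (n+2)) (u : Vc d) :
    fderiv ℝ (Vtot U1 U2) q (Pi.single k u) = fderiv ℝ U1 (cfgNat q k) u
      + (if (k:ℕ) = n + 1 then 0 else fderiv ℝ U2 (cfgNat q k - cfgNat q (k+1)) u)
      - (if (k:ℕ) = 0 then 0 else fderiv ℝ U2 (cfgNat q (k-1) - cfgNat q k) u) := by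
  rw [fderiv_Vtot hU1 hU2]
  simp only [map_sub, Finset.sum_sub_distrib]
  have hc : ∀ (m : ℕ) (hm : m < n+2), cfgNat q m = q ⟨m, hm⟩ := fun m hm => by simp [cfgNat, hm]
  have a1 : ∑ i, fderiv ℝ U1 (q i) ((Pi.single k u : Cfg (n+2) d) i) = fderiv ℝ U1 (cfgNat q k) u := by
    rw [Finset.sum_eq_single k]
    · simp [cfgNat]
    · intro b _ hb; simp [hb]
    · simp
  have a2 : ∑ i : Fin (n+1), fderiv ℝ U2 (q i.castSucc - q i.succ)
      ((Pi.single k u : Cfg (n+2) d) i.castSucc) =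
      (if (k:ℕ) = n + 1 then 0 else fderiv ℝ U2 (cfgNat q k - cfgNat q (k+1)) u) := by
    induction k using Fin.lastCases with
    | last =>
      simp only [Fin.val_last, if_true]
      refine Finset.sum_eq_zero fun i _ => ?_
      rw [Pi.single_eq_of_ne (Fin.castSucc_lt_last i).ne, map_zero]
    | cast k =>
      rw [if_neg (by simp; omega), Finset.sum_eq_single k]
      · rw [Pi.single_eq_same, hc _ (by simp; omega), hc _ (by simp <;> omega)]; rfl
      · intro b _ hb
        rw [Pi.single_eq_of_ne (fun h => hb (Fin.castSucc_injective _ h)), map_zero]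
      · simp
  have a3 : ∑ i : Fin (n+1), fderiv ℝ U2 (q i.castSucc - q i.succ)
      ((Pi.single k u : Cfg (n+2) d) i.succ) =
      (if (k:ℕ) = 0 then 0 else fderiv ℝ U2 (cfgNat q (k-1) - cfgNat q k) u) := by
    induction k using Fin.cases with
    | zero =>
      simp only [Fin.val_zero, if_true]
      refine Finset.sum_eq_zero fun i _ => ?_
      rw [Pi.single_eq_of_ne (Fin.succ_ne_zero i), map_zero]
    | succ k =>
      rw [if_neg (by simp), Finset.sum_eq_single k]
      · rw [Pi.single_eq_same, hc _ (by simp; omega), hc _ (by simp <;> omega)]; rfl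
      · intro b _ hb
        rw [Pi.single_eq_of_ne (fun h => hb (Fin.succ_injective _ h)), map_zero]
      · simp
  rw [a1, a2, a3]
  ring

lemma PD_Hloc_Wf (lam : ℝ) {U1 U2 : Vc d → ℝ} (hU1 : ContDiff ℝ (⊤ : ℕ∞) U1)
    (hU2 : ContDiff ℝ (⊤ : ℕ∞) U2) (k : ℕ) (hk : k < n + 2) (x : Phs (n+2) d) :
    PD (Hloc U1 U2 k) x (Wf lam U1 U2 x) = heatFlow lam U2 k x - heatFlow lam U2 (k+1) x := by
  rw [PD_Hloc hU1 hU2]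
  have hp : cfgNat x.1 k = x.1 ⟨k, hk⟩ := by simp [cfgNat, hk]
  have s1 : ∑ a, cfgNat x.1 k a * cfgNat (Wf lam U1 U2 x).1 k a
      = - fderiv ℝ (Vtot U1 U2) x.2.1 (Pi.single ⟨k, hk⟩ (cfgNat x.1 k))
        - (if k = 0 then lam * ∑ a, x.2.2.1 a * x.1 0 a else 0)
        - (if k = n+1 then lam * ∑ a, x.2.2.2 a * x.1 (Fin.last (n+1)) a else 0) := by
    have hw : cfgNat (Wf lam U1 U2 x).1 k = (Wf lam U1 U2 x).1 ⟨k, hk⟩ := by simp [cfgNat, hk]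
    have := lin_sum ((fderiv ℝ (Vtot U1 U2) x.2.1).comp
      (ContinuousLinearMap.single ℝ (fun _ : Fin (n+2) => Vc d) ⟨k, hk⟩)) (cfgNat x.1 k)
    have h3 : ∑ a, cfgNat x.1 k a * fderiv ℝ (Vtot U1 U2) x.2.1 (Pi.single ⟨k, hk⟩ (Pi.single a 1))
      = fderiv ℝ (Vtot U1 U2) x.2.1 (Pi.single ⟨k, hk⟩ (cfgNat x.1 k)) := this
    rw [hw, ← h3]
    simp only [Wf, mul_sub, Finset.sum_sub_distrib, mul_neg, Finset.sum_neg_distrib]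
    congr 1
    · congr 1
      by_cases h : k = 0
      · subst h
        simp only [Fin.mk_zero, if_true, Finset.mul_sum, hp]
        exact Finset.sum_congr rfl fun a _ => by ring
      · have : (⟨k, hk⟩ : Fin (n+2)) ≠ 0 := fun e => h (by simpa using congrArg Fin.val e)
        simp [h, this]
    · by_cases h : k = n+1
      · subst h
        have : (⟨n+1, hk⟩ : Fin (n+2)) = Fin.last (n+1) := rfl
        simp only [this, if_true, Finset.mul_sum, hp]
        exact Finset.sum_congr rfl fun a _ => by ring
      · have : (⟨k, hk⟩ : Fin (n+2)) ≠ Fin.last (n+1) :=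
          fun e => h (by simpa using congrArg Fin.val e)
        simp [h, this]
  have hf : ∀ i, i ≠ 0 → i ≠ n + 2 → heatFlow lam U2 i x = (1/2) *
      (fderiv ℝ U2 (cfgNat x.2.1 (i-1) - cfgNat x.2.1 i) (cfgNat x.1 (i-1)) +
       fderiv ℝ U2 (cfgNat x.2.1 (i-1) - cfgNat x.2.1 i) (cfgNat x.1 i)) := by
    intro i h1 h2
    rw [heatFlow, if_neg h1, if_neg h2, ← map_add, ← lin_sum, Finset.mul_sum]
    exact Finset.sum_congr rfl fun a _ => by simp only [Pi.add_apply]; ring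
  rw [s1, fderiv_Vtot_single hU1 hU2]
  have hq : (Wf lam U1 U2 x).2.1 = x.1 := rfl
  simp only [hq, map_sub]
  rcases Nat.eq_zero_or_pos k with h0 | h0
  · subst h0
    rw [hf (0+1) (by omega) (by omega)]
    simp [heatFlow]
    ring
  · have h0' : k ≠ 0 := by omega
    rw [hf k h0' (by omega)]
    by_cases h1 : k = n+1
    · subst h1
      simp [heatFlow]
      ring
    · rw [hf (k+1) (by omega) (by omega)]
      simp [h0', h1]
      ring

lemma PD_Rj (T1 Tn : ℝ) {U1 U2 : Vc d → ℝ} (hU1 : ContDiff ℝ (⊤ : ℕ∞) U1)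
    (hU2 : ContDiff ℝ (⊤ : ℕ∞) U2) (j : ℕ) (x v : Phs (n+2) d) :
    PD (Rj T1 Tn U1 U2 j) x v =
      (1 / T1) * ((∑ a, x.2.2.1 a * v.2.2.1 a) + ∑ k ∈ Finset.range j, PD (Hloc U1 U2 k) x v)
      + (1 / Tn) * ((∑ k ∈ Finset.Ico j (n+2), PD (Hloc U1 U2 k) x v)
        + ∑ a, x.2.2.2 a * v.2.2.2 a) := by
  have h0 := hasDerivAt_line ((Rj_smooth (n := n) T1 Tn hU1 hU2 j).differentiable (by simp)) x v
  refine h0.unique ?_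
  have hH := fun k => hasDerivAt_line ((Hloc_smooth (n := n) hU1 hU2 k).differentiable (by simp)) x v
  unfold Rj
  exact (((hasDerivAt_sq _ _).fun_add (HasDerivAt.fun_sum fun k _ => hH k)).const_mul _).fun_add
    (((HasDerivAt.fun_sum fun k _ => hH k).fun_add (hasDerivAt_sq _ _)).const_mul _)

lemma PD_Rj_Wf (lam T1 Tn : ℝ) {U1 U2 : Vc d → ℝ} (hU1 : ContDiff ℝ (⊤ : ℕ∞) U1)
    (hU2 : ContDiff ℝ (⊤ : ℕ∞) U2) (j : ℕ) (hj : j ≤ n + 2) (x : Phs (n+2) d) :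
    PD (Rj T1 Tn U1 U2 j) x (Wf lam U1 U2 x) = sigmaEP lam T1 Tn U2 j x := by
  rw [PD_Rj T1 Tn hU1 hU2]
  have h1 : ∑ k ∈ Finset.range j, PD (Hloc U1 U2 k) x (Wf lam U1 U2 x)
      = heatFlow lam U2 0 x - heatFlow lam U2 j x := by
    rw [← Finset.sum_range_sub' (fun k => heatFlow lam U2 k x) j]
    refine Finset.sum_congr rfl fun k hk => PD_Hloc_Wf lam hU1 hU2 k ?_ x
    have := Finset.mem_range.1 hk
    omega
  have h2 : ∑ k ∈ Finset.Ico j (n+2), PD (Hloc U1 U2 k) x (Wf lam U1 U2 x)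
      = heatFlow lam U2 j x - heatFlow lam U2 (n+2) x := by
    have e := Finset.sum_Ico_sub (fun k => heatFlow lam U2 k x) hj
    rw [← neg_sub (heatFlow lam U2 (n+2) x), ← e, ← Finset.sum_neg_distrib]
    refine Finset.sum_congr rfl fun k hk => ?_
    rw [PD_Hloc_Wf lam hU1 hU2 k (Finset.mem_Ico.1 hk).2 x, neg_sub]
  have h3 : ∑ a, x.2.2.1 a * (Wf lam U1 U2 x).2.2.1 a = - heatFlow lam U2 0 x := by
    simp only [Wf, heatFlow, if_true, Pi.smul_apply, smul_eq_mul, neg_mul, neg_neg, Finset.mul_sum,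
      Finset.sum_neg_distrib]
    exact Finset.sum_congr rfl fun a _ => by ring
  have h4 : ∑ a, x.2.2.2 a * (Wf lam U1 U2 x).2.2.2 a = heatFlow lam U2 (n+2) x := by
    rw [heatFlow, if_neg (by omega), if_pos rfl]
    simp only [Wf, Pi.smul_apply, smul_eq_mul, Finset.mul_sum]
    exact Finset.sum_congr rfl fun a _ => by ring
  rw [h1, h2, h3, h4, sigmaEP]
  ring

lemma cfgNat_zero (k : ℕ) : cfgNat (0 : Cfg (n+2) d) k = 0 := by
  rw [cfgNat_eq, map_zero]

lemma PD_Rj_R1 (T1 Tn : ℝ) {U1 U2 : Vc d → ℝ} (hU1 : ContDiff ℝ (⊤ : ℕ∞) U1)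
    (hU2 : ContDiff ℝ (⊤ : ℕ∞) U2) (j : ℕ) (x : Phs (n+2) d) (a : Fin d) :
    PD (Rj T1 Tn U1 U2 j) x (eR1 a) = (1 / T1) * x.2.2.1 a := by
  rw [PD_Rj T1 Tn hU1 hU2]
  simp [PD_Hloc hU1 hU2, eR1, cfgNat_zero, Pi.single_apply]

lemma PD_Rj_Rn (T1 Tn : ℝ) {U1 U2 : Vc d → ℝ} (hU1 : ContDiff ℝ (⊤ : ℕ∞) U1)
    (hU2 : ContDiff ℝ (⊤ : ℕ∞) U2) (j : ℕ) (x : Phs (n+2) d) (a : Fin d) :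
    PD (Rj T1 Tn U1 U2 j) x (eRn a) = (1 / Tn) * x.2.2.2 a := by
  rw [PD_Rj T1 Tn hU1 hU2]
  simp [PD_Hloc hU1 hU2, eRn, cfgNat_zero, Pi.single_apply]

lemma Rj_J (T1 Tn : ℝ) (U1 U2 : Vc d → ℝ) (j : ℕ) (x : Phs (n+2) d) :
    Rj T1 Tn U1 U2 j (Jl _ _ x) = Rj T1 Tn U1 U2 j x := by
  simp [Rj, Hloc, Jl_apply, cfgNat_eq]

lemma PD_lin (f g : Phs m d → ℝ) (hf : Differentiable ℝ f) (hg : Differentiable ℝ g)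
    (x v : Phs m d) : PD (fun y => - f y - g y) x v = - PD f x v - PD g x v := by
  have := ((hf x).hasFDerivAt.fun_neg.fun_sub (hg x).hasFDerivAt).fderiv
  unfold PD
  rw [this]
  simp

lemma key (γ lam T1 Tn : ℝ) (hT1 : 0 < T1) (hTn : 0 < Tn)
    (U1 U2 : Vc d → ℝ) (hU1 : ContDiff ℝ (⊤ : ℕ∞) U1) (hU2 : ContDiff ℝ (⊤ : ℕ∞) U2)
    (j : ℕ) (hj : j ≤ n + 2)
    (ρ : Phs (n+2) d → ℝ) (hρ : ContDiff ℝ (⊤ : ℕ∞) ρ) (hρpos : ∀ x, 0 < ρ x)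
    (hstat : ∀ x, genT γ lam T1 Tn U1 U2 ρ x = 0)
    (F : Phs (n+2) d → ℝ)
    (hF : ∀ x : Phs (n+2) d,
      F x = - Rj T1 Tn U1 U2 j x - Real.log (ρ (-x.1, x.2.1, x.2.2.1, x.2.2.2)))
    (x : Phs (n+2) d) :
    sigmaEP lam T1 Tn U2 j x = γ * (T1 * (∑ a, (PD F x (eR1 a)) ^ 2)
      + Tn * (∑ a, (PD F x (eRn a)) ^ 2)) - gen γ lam T1 Tn U1 U2 F x := by
  have hR := Rj_smooth (n := n) T1 Tn hU1 hU2 j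
  have hFs : ContDiff ℝ (⊤ : ℕ∞) F := by
    have : F = fun x => - Rj T1 Tn U1 U2 j x - Real.log (ρ (Jl _ _ x)) := funext hF
    rw [this]
    exact hR.neg.sub ((hρ.comp (Jl (n+2) d).contDiff).log fun x => (hρpos _).ne')
  have hRd := hR.differentiable (by simp)
  have hFd := hFs.differentiable (by simp)
  set G : Phs (n+2) d → ℝ := fun y => - Rj T1 Tn U1 U2 j y - F y with hGdef
  have hG : ContDiff ℝ (⊤ : ℕ∞) G := hR.neg.sub hFs
  have hGd := hG.differentiable (by simp)
  have hρG : ρ = fun y => Real.exp (G (Jl _ _ y)) := by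
    funext y
    have e := hF (Jl _ _ y)
    have e' : F (Jl _ _ y) = - Rj T1 Tn U1 U2 j (Jl _ _ y) - Real.log (ρ (Jl _ _ (Jl _ _ y))) := e
    rw [Jl_Jl] at e'
    simp only [hGdef, e']
    rw [show ∀ a b : ℝ, -a - (-a - b) = b by intros; ring, Real.exp_log (hρpos y)]
  have h := hstat (Jl _ _ x)
  rw [hρG] at h
  have hh := genT_eq γ lam T1 Tn U1 U2 (fun y => Real.exp (G y)) hG.exp x
  rw [hh] at h
  simp_rw [PD_PD_exp hG, PD_exp hGd] at h
  have p1 : ∀ y a, PD G y (eR1 a) = -((1/T1) * y.2.2.1 a) - PD F y (eR1 a) := by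
    intro y a
    rw [hGdef, PD_lin _ _ hRd hFd]
    rw [← PD_Rj_R1 T1 Tn hU1 hU2 j y a]
  have pn : ∀ y a, PD G y (eRn a) = -((1/Tn) * y.2.2.2 a) - PD F y (eRn a) := by
    intro y a
    rw [hGdef, PD_lin _ _ hRd hFd]
    rw [← PD_Rj_Rn T1 Tn hU1 hU2 j y a]
  have pw : PD G x (Wf lam U1 U2 x) = - sigmaEP lam T1 Tn U2 j x - PD F x (Wf lam U1 U2 x) := by
    rw [hGdef, PD_lin _ _ hRd hFd, ← PD_Rj_Wf lam T1 Tn hU1 hU2 j hj x]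
  have pp1 : ∀ a, PD (fun y => PD G y (eR1 a)) x (eR1 a)
      = -(1/T1) - PD (fun y => PD F y (eR1 a)) x (eR1 a) := by
    intro a
    simp_rw [p1]
    have hd1 : Differentiable ℝ (fun y : Phs (n+2) d => (1/T1) * y.2.2.1 a) := by fun_prop
    rw [PD_lin _ _ hd1 (PD_diff hFs _)]
    congr 2
    have := PD_r1 (g := fun _ : Phs (n+2) d => 1/T1) (differentiable_const _) x a
    simp_rw [mul_comm _ (1/T1)] at this
    rw [this]; simp [PD]
  have ppn : ∀ a, PD (fun y => PD G y (eRn a)) x (eRn a)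
      = -(1/Tn) - PD (fun y => PD F y (eRn a)) x (eRn a) := by
    intro a
    simp_rw [pn]
    have hd1 : Differentiable ℝ (fun y : Phs (n+2) d => (1/Tn) * y.2.2.2 a) := by fun_prop
    rw [PD_lin _ _ hd1 (PD_diff hFs _)]
    congr 2
    have := PD_rn (g := fun _ : Phs (n+2) d => 1/Tn) (differentiable_const _) x a
    simp_rw [mul_comm _ (1/Tn)] at this
    rw [this]; simp [PD]
  simp_rw [pp1, ppn, p1, pn, pw] at h
  rw [gen_eq]
  have alg : ∀ (T E : ℝ) (_ : 0 < T) (D P r : Fin d → ℝ),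
      T * ∑ a, E * (-(1/T) - D a + (-(1/T * r a) - P a)^2)
        + ∑ a, (E + r a * (E * (-(1/T * r a) - P a)))
      = E * (T * ∑ a, P a ^ 2 - (T * ∑ a, D a - ∑ a, r a * P a)) := by
    intro T E hT D P r
    simp only [Finset.mul_sum, ← Finset.sum_sub_distrib, ← Finset.sum_add_distrib]
    refine Finset.sum_congr rfl fun a _ => ?_
    field_simp
    ring
  rw [alg T1 _ hT1 (fun a => PD (fun y => PD F y (eR1 a)) x (eR1 a)) (fun a => PD F x (eR1 a)),
    alg Tn _ hTn (fun a => PD (fun y => PD F y (eRn a)) x (eRn a)) (fun a => PD F x (eRn a))] at h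
  have hE : Real.exp (G x) ≠ 0 := (Real.exp_pos _).ne'
  apply mul_left_cancel₀ hE
  linear_combination -h

/-- if ρ is a smooth everywhere positive normalized stationary
density (`Lᵀρ = 0`, `∫ρ = 1`), μ = ρ dx, and `F = −R_j − log(Jρ)`, and if `LF`
and `|∇_{rᵢ}F|²` are μ-integrable with `∫ LF dμ = 0`, then the mean entropy
production in the stationary state is nonnegative:
`∫ σ_j dμ = γ Σ_{i∈{1,n}} Tᵢ ∫ |∇_{rᵢ}F|² dμ ≥ 0`. -/
theorem stmt7 (n d : ℕ) (hd : 1 ≤ d) (γ lam T1 Tn : ℝ)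
    (hγ : 0 < γ) (hlam : 0 < lam) (hT1 : 0 < T1) (hTn : 0 < Tn)
    (U1 U2 : Vc d → ℝ) (hU1 : ContDiff ℝ (⊤ : ℕ∞) U1) (hU2 : ContDiff ℝ (⊤ : ℕ∞) U2)
    (j : ℕ) (hj : j ≤ n + 2)
    (ρ : Phs (n+2) d → ℝ) (hρ : ContDiff ℝ (⊤ : ℕ∞) ρ) (hρpos : ∀ x, 0 < ρ x)
    (hstat : ∀ x, genT γ lam T1 Tn U1 U2 ρ x = 0)
    (hnorm : ∫ x : Phs (n+2) d, ρ x = 1)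
    (μ : Measure (Phs (n+2) d))
    (hμ : μ = volume.withDensity (fun x => ENNReal.ofReal (ρ x)))
    (F : Phs (n+2) d → ℝ)
    (hF : ∀ x : Phs (n+2) d,
      F x = - Rj T1 Tn U1 U2 j x - Real.log (ρ (-x.1, x.2.1, x.2.2.1, x.2.2.2)))
    (hLF : Integrable (gen γ lam T1 Tn U1 U2 F) μ)
    (hF1 : Integrable (fun x => ∑ a, (PD F x (eR1 a)) ^ 2) μ)
    (hFn : Integrable (fun x => ∑ a, (PD F x (eRn a)) ^ 2) μ)
    (hLF0 : ∫ x, gen γ lam T1 Tn U1 U2 F x ∂μ = 0) :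
    (∫ x, sigmaEP lam T1 Tn U2 j x ∂μ
        = γ * (T1 * ∫ x, (∑ a, (PD F x (eR1 a)) ^ 2) ∂μ
               + Tn * ∫ x, (∑ a, (PD F x (eRn a)) ^ 2) ∂μ))
      ∧ 0 ≤ ∫ x, sigmaEP lam T1 Tn U2 j x ∂μ := by
  have hkey := key γ lam T1 Tn hT1 hTn U1 U2 hU1 hU2 j hj ρ hρ hρpos hstat F hF
  have h1 : ∫ x, sigmaEP lam T1 Tn U2 j x ∂μ
        = γ * (T1 * ∫ x, (∑ a, (PD F x (eR1 a)) ^ 2) ∂μ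
               + Tn * ∫ x, (∑ a, (PD F x (eRn a)) ^ 2) ∂μ) := by
    simp_rw [hkey]
    rw [integral_sub (((hF1.const_mul T1).fun_add (hFn.const_mul Tn)).const_mul γ) hLF, hLF0, sub_zero,
      integral_const_mul, integral_add (hF1.const_mul T1) (hFn.const_mul Tn),
      integral_const_mul, integral_const_mul]
  refine ⟨h1, ?_⟩
  rw [h1]
  have i1 : 0 ≤ ∫ x, (∑ a, (PD F x (eR1 a)) ^ 2) ∂μ :=
    integral_nonneg fun x => Finset.sum_nonneg fun a _ => sq_nonneg _
  have i2 : 0 ≤ ∫ x, (∑ a, (PD F x (eRn a)) ^ 2) ∂μ :=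
    integral_nonneg fun x => Finset.sum_nonneg fun a _ => sq_nonneg _
  positivity

end
end

section
/- Let μ be a Borel probability measure on X such that each heat flow Φ_j (0 ≤ j ≤ n) and each L H_k (1 ≤ k ≤ n) is μ-integrable and ∫ (L H_k) dμ = 0 for all k (infinitesimal invariance of μ tested on the local energies). Then the mean heat flow is the same everywhere along the chain: ∫ Φ_j dμ = ∫ Φ₀ dμ for all 0 ≤ j ≤ n; in particular the mean entropy production ∫ σ_j dμ does not depend on j. -/
open scoped BigOperators

noncomputable section

variable {m d : ℕ}

variable {n : ℕ}

open MeasureTheory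

def cfgL (n d k : ℕ) : Cfg (n+2) d →L[ℝ] Vc d :=
  if h : k < n + 2 then ContinuousLinearMap.proj (R := ℝ) (φ := fun _ : Fin (n+2) => Vc d) ⟨k, h⟩ else 0

lemma cfgL_apply (n d k : ℕ) (q : Cfg (n+2) d) : cfgL n d k q = cfgNat q k := by
  unfold cfgL cfgNat
  split_ifs <;> rfl

lemma cfgNat_add (k : ℕ) {n d : ℕ} (q v : Cfg (n+2) d) : cfgNat (q + v) k = cfgNat q k + cfgNat v k := by
  simp [← cfgL_apply]

lemma cfgNat_val {n d : ℕ} (q : Cfg (n+2) d) (i : Fin (n+2)) : cfgNat q i = q i := by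
  simp [cfgNat]

lemma sum_clm {d : ℕ} (φ : Vc d →L[ℝ] ℝ) (v : Vc d) :
    ∑ a, v a * φ (Pi.single a 1) = φ v := by
  conv_rhs => rw [pi_eq_sum_univ' v]
  rw [map_sum]
  refine Finset.sum_congr rfl fun a _ => ?_
  rw [map_smul, smul_eq_mul]

lemma sum_single_clm {d m : ℕ} (φ : Cfg m d →L[ℝ] ℝ) (i : Fin m) (v : Vc d) :
    ∑ a, v a * φ (Pi.single i (Pi.single a 1)) = φ (Pi.single i v) :=
  sum_clm (φ.comp (ContinuousLinearMap.single ℝ (fun _ : Fin m => Vc d) i)) v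

lemma sum_cfg_clm {d m : ℕ} (φ : Cfg m d →L[ℝ] ℝ) (p : Cfg m d) :
    ∑ i, ∑ a, p i a * φ (Pi.single i (Pi.single a 1)) = φ p := by
  simp_rw [sum_single_clm]
  rw [← map_sum, Finset.univ_sum_single]

/-- explicit derivative of the local energy -/
lemma Hloc_deriv {n d : ℕ} (U1 U2 : Vc d → ℝ) (hU1 : Differentiable ℝ U1) (hU2 : Differentiable ℝ U2)
    (k : ℕ) (x v : Phs (n+2) d) :
    PD (Hloc U1 U2 k) x v = (∑ a, cfgNat x.1 k a * cfgNat v.1 k a)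
      + fderiv ℝ U1 (cfgNat x.2.1 k) (cfgNat v.2.1 k)
      + (if k = 0 then 0 else (1/2) * fderiv ℝ U2 (cfgNat x.2.1 (k-1) - cfgNat x.2.1 k)
          (cfgNat v.2.1 (k-1) - cfgNat v.2.1 k))
      + (if k = n + 1 then 0 else (1/2) * fderiv ℝ U2 (cfgNat x.2.1 k - cfgNat x.2.1 (k+1))
          (cfgNat v.2.1 k - cfgNat v.2.1 (k+1))) := by
  have hP : ∀ k, HasFDerivAt (fun y : Phs (n+2) d => cfgNat y.1 k)
      ((cfgL n d k).comp (ContinuousLinearMap.fst ℝ _ _)) x := fun k => by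
    simp_rw [← cfgL_apply]
    exact ContinuousLinearMap.hasFDerivAt (𝕜 := ℝ) (E := Phs (n+2) d) (F := Vc d)
      ((cfgL n d k).comp (ContinuousLinearMap.fst ℝ _ _))
  have hQ : ∀ k, HasFDerivAt (fun y : Phs (n+2) d => cfgNat y.2.1 k)
      ((cfgL n d k).comp ((ContinuousLinearMap.fst ℝ _ _).comp (ContinuousLinearMap.snd ℝ _ _))) x := fun k => by
    simp_rw [← cfgL_apply]
    exact ContinuousLinearMap.hasFDerivAt (𝕜 := ℝ) (E := Phs (n+2) d) (F := Vc d)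
      ((cfgL n d k).comp ((ContinuousLinearMap.fst ℝ _ _).comp (ContinuousLinearMap.snd ℝ _ _)))
  have h1 : HasFDerivAt (fun y : Phs (n+2) d => U1 (cfgNat y.2.1 k)) _ x :=
    (hU1 (cfgNat x.2.1 k)).hasFDerivAt.comp x (hQ k)
  have h2 : ∀ a b, HasFDerivAt (fun y : Phs (n+2) d => U2 (cfgNat y.2.1 a - cfgNat y.2.1 b)) _ x :=
    fun a b => HasFDerivAt.comp x (f := fun y : Phs (n+2) d => cfgNat y.2.1 a - cfgNat y.2.1 b)
      (hU2 (cfgNat x.2.1 a - cfgNat x.2.1 b)).hasFDerivAt ((hQ a).sub (hQ b))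
  have hs := HasFDerivAt.fun_sum (u := (Finset.univ : Finset (Fin d)))
      (fun a _ => ((hasFDerivAt_pi'.1 (hP k)) a).pow 2)
  have h0 := hs.mul_const (2⁻¹ : ℝ)
  have h3 : HasFDerivAt (fun y : Phs (n+2) d =>
      (if k = 0 then 0 else (1/2) * U2 (cfgNat y.2.1 (k-1) - cfgNat y.2.1 k) : ℝ))
      (if k = 0 then 0 else (1/2 : ℝ) • fderiv ℝ (fun y : Phs (n+2) d => U2 (cfgNat y.2.1 (k-1) - cfgNat y.2.1 k)) x) x := by
    split_ifs
    · exact hasFDerivAt_const _ _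
    · exact (h2 (k-1) k).differentiableAt.hasFDerivAt.const_mul (1/2)
  have h4 : HasFDerivAt (fun y : Phs (n+2) d =>
      (if k = n+1 then 0 else (1/2) * U2 (cfgNat y.2.1 k - cfgNat y.2.1 (k+1)) : ℝ))
      (if k = n+1 then 0 else (1/2 : ℝ) • fderiv ℝ (fun y : Phs (n+2) d => U2 (cfgNat y.2.1 k - cfgNat y.2.1 (k+1))) x) x := by
    split_ifs
    · exact hasFDerivAt_const _ _
    · exact (h2 k (k+1)).differentiableAt.hasFDerivAt.const_mul (1/2)
  have := (((h0.add h1).add h3).add h4).fderiv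
  unfold PD
  change fderiv ℝ (Hloc U1 U2 k) x = _ at this
  rw [this, (h2 _ _).fderiv, (h2 _ _).fderiv]
  split_ifs <;> simp [cfgL_apply, Finset.mul_sum, mul_assoc]

lemma Vtot_deriv {n d : ℕ} (U1 U2 : Vc d → ℝ) (hU1 : Differentiable ℝ U1) (hU2 : Differentiable ℝ U2)
    (q v : Cfg (n+2) d) :
    fderiv ℝ (Vtot U1 U2) q v = (∑ i, fderiv ℝ U1 (q i) (v i))
      + ∑ i : Fin (n+1), fderiv ℝ U2 (q i.castSucc - q i.succ) (v i.castSucc - v i.succ) := by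
  have hQ : ∀ i, HasFDerivAt (fun y : Cfg (n+2) d => y i)
      (ContinuousLinearMap.proj (R := ℝ) (φ := fun _ : Fin (n+2) => Vc d) i) q := fun i =>
    (ContinuousLinearMap.proj (R := ℝ) (φ := fun _ : Fin (n+2) => Vc d) i).hasFDerivAt
  have h1 : ∀ i, HasFDerivAt (fun y : Cfg (n+2) d => U1 (y i)) _ q := fun i =>
    (hU1 (q i)).hasFDerivAt.comp q (hQ i)
  have h2 : ∀ a b, HasFDerivAt (fun y : Cfg (n+2) d => U2 (y a - y b)) _ q :=
    fun a b => HasFDerivAt.comp q (f := fun y : Cfg (n+2) d => y a - y b)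
      (hU2 (q a - q b)).hasFDerivAt ((hQ a).sub (hQ b))
  have := ((HasFDerivAt.fun_sum (u := (Finset.univ : Finset (Fin (n+2)))) (fun i _ => h1 i)).add
    (HasFDerivAt.fun_sum (u := (Finset.univ : Finset (Fin (n+1))))
      (fun i _ => h2 i.castSucc i.succ))).fderiv
  change fderiv ℝ (Vtot U1 U2) q = _ at this
  rw [this]
  simp

lemma Vtot_single {n d : ℕ} (U1 U2 : Vc d → ℝ) (hU1 : Differentiable ℝ U1) (hU2 : Differentiable ℝ U2)
    (q : Cfg (n+2) d) (k : Fin (n+2)) (w : Vc d) :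
    fderiv ℝ (Vtot U1 U2) q (Pi.single k w) = fderiv ℝ U1 (q k) w
      + ((if (k : ℕ) = n + 1 then 0 else fderiv ℝ U2 (cfgNat q k - cfgNat q (k+1)) w)
      - (if (k : ℕ) = 0 then 0 else fderiv ℝ U2 (cfgNat q (k-1) - cfgNat q k) w)) := by
  rw [Vtot_deriv U1 U2 hU1 hU2]
  simp_rw [map_sub]
  rw [Finset.sum_sub_distrib]
  congr 1
  · rw [Finset.sum_eq_single k]
    · simp
    · intro b _ hb; simp [Pi.single_eq_of_ne hb]
    · simp
  congr 1
  · rcases Fin.eq_castSucc_or_eq_last k with ⟨j, rfl⟩ | rfl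
    · rw [Finset.sum_eq_single j]
      · rw [if_neg (by have := j.2; simp; omega)]
        have : cfgNat q ((j.castSucc : ℕ) + 1) = q j.succ := cfgNat_val q j.succ
        rw [this, cfgNat_val]; simp
      · intro b _ hb
        rw [Pi.single_eq_of_ne (fun h => hb (Fin.castSucc_injective _ h))]; simp
      · simp
    · rw [if_pos (by simp)]
      refine Finset.sum_eq_zero fun b _ => ?_
      rw [Pi.single_eq_of_ne (Fin.castSucc_lt_last b).ne]; simp
  · rcases Fin.eq_zero_or_eq_succ k with rfl | ⟨j, rfl⟩
    · rw [if_pos (by simp)]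
      refine Finset.sum_eq_zero fun b _ => ?_
      rw [Pi.single_eq_of_ne (Fin.succ_ne_zero b)]; simp
    · rw [Finset.sum_eq_single j]
      · rw [if_neg (by simp)]
        have : cfgNat q ((j.succ : ℕ) - 1) = q j.castSucc := by
          have := cfgNat_val q j.castSucc
          simpa using this
        rw [this, cfgNat_val]; simp
      · intro b _ hb
        rw [Pi.single_eq_of_ne (fun h => hb (Fin.succ_injective _ h))]; simp
      · simp

lemma gen_Hloc {n d : ℕ} (γ lam T1 Tn : ℝ) (U1 U2 : Vc d → ℝ)
    (hU1 : Differentiable ℝ U1) (hU2 : Differentiable ℝ U2) (k : Fin (n+2)) (x : Phs (n+2) d) :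
    gen γ lam T1 Tn U1 U2 (Hloc U1 U2 k) x = heatFlow lam U2 k x - heatFlow lam U2 (k+1) x := by
  have z : ∀ j, cfgNat (0 : Cfg (n+2) d) j = 0 := fun j => by rw [← cfgL_apply, map_zero]
  have e1 : ∀ (y : Phs (n+2) d) a, PD (Hloc U1 U2 k) y (eR1 a) = 0 := fun y a => by
    rw [Hloc_deriv U1 U2 hU1 hU2]; simp [eR1, z]
  have e2 : ∀ (y : Phs (n+2) d) a, PD (Hloc U1 U2 k) y (eRn a) = 0 := fun y a => by
    rw [Hloc_deriv U1 U2 hU1 hU2]; simp [eRn, z]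
  have e3 : ∀ i a, PD (Hloc U1 U2 k) x (eP i a) = if i = k then x.1 k a else 0 := fun i a => by
    rw [Hloc_deriv U1 U2 hU1 hU2]
    simp only [eP, z, cfgNat_val]
    split_ifs with h <;> first | subst h | skip
    all_goals simp [Pi.single_apply, *]
    all_goals
      rw [Pi.single_eq_of_ne (fun h' => h h'.symm)]; simp
  have e4 : ∑ i, ∑ a, x.1 i a * PD (Hloc U1 U2 k) x (eQ i a) = PD (Hloc U1 U2 k) x (0, x.1, 0, 0) :=
    sum_cfg_clm ((fderiv ℝ (Hloc U1 U2 k) x).comp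
      ((ContinuousLinearMap.inr ℝ _ _).comp (ContinuousLinearMap.inl ℝ _ _))) x.1
  have e5 : ∑ i, ∑ a, fderiv ℝ (Vtot U1 U2) x.2.1 (Pi.single i (Pi.single a 1)) * PD (Hloc U1 U2 k) x (eP i a)
      = fderiv ℝ (Vtot U1 U2) x.2.1 (Pi.single k (x.1 k)) := by
    rw [← sum_single_clm, Finset.sum_eq_single k]
    · simp [e3, mul_comm]
    · intro b _ hb; simp [e3, hb]
    · simp
  have hflow : ∀ j, ∑ a, ((cfgNat x.1 (j-1) a + cfgNat x.1 j a) / 2)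
        * fderiv ℝ U2 (cfgNat x.2.1 (j-1) - cfgNat x.2.1 j) (Pi.single a 1)
      = (fderiv ℝ U2 (cfgNat x.2.1 (j-1) - cfgNat x.2.1 j) (cfgNat x.1 (j-1)) +
        fderiv ℝ U2 (cfgNat x.2.1 (j-1) - cfgNat x.2.1 j) (cfgNat x.1 j)) / 2 := fun j => by
    rw [← sum_clm, ← sum_clm _ (cfgNat x.1 j), ← Finset.sum_add_distrib, Finset.sum_div]
    refine Finset.sum_congr rfl fun a _ => ?_
    ring
  have e6 : ∀ (i : Fin (n+2)) (r : Vc d), ∑ a, r a * (if i = k then x.1 k a else 0)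
      = if k = i then ∑ a, r a * x.1 i a else 0 := fun i r => by
    by_cases h : i = k
    · subst h; simp
    · simp [h, Ne.symm h]
  have z0 : ∀ v : Phs (n+2) d, PD (fun _ : Phs (n+2) d => (0:ℝ)) x v = 0 := fun v => by simp [PD]
  unfold gen
  rw [Finset.sum_sub_distrib, e4, e5, Hloc_deriv U1 U2 hU1 hU2, Vtot_single U1 U2 hU1 hU2]
  simp only [e1, e2, e3, e6, z0, z]
  unfold heatFlow
  have hk := k.2
  simp only [hflow]
  simp only [Fin.ext_iff, Fin.val_last, Fin.val_zero, Nat.add_sub_cancel]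
  rw [if_neg (show ¬ ((k:ℕ) = n + 2) by omega), if_neg (show ¬ ((k:ℕ) + 1 = 0) by omega)]
  simp only [Nat.add_right_cancel_iff, map_sub, cfgNat_val, Pi.zero_apply, mul_zero, Finset.sum_const_zero]
  by_cases h0 : (k : ℕ) = 0 <;> by_cases hl : (k : ℕ) = n + 1
  · omega
  · simp only [if_pos h0, if_neg hl]
    ring
  · simp only [if_neg h0, if_pos hl]
    ring
  · simp only [if_neg h0, if_neg hl]
    ring

/-- if μ is a Borel probability measure on X for which every heat
flow Φ_j and every L H_k is integrable and `∫ L H_k dμ = 0` (infinitesimal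
invariance tested on the local energies), then the mean heat flow is the same
everywhere along the chain: `∫ Φ_j dμ = ∫ Φ₀ dμ` for all j; in particular the
mean entropy production `∫ σ_j dμ` does not depend on j. -/
theorem stmt8 (n d : ℕ) (hd : 1 ≤ d) (γ lam T1 Tn : ℝ)
    (hγ : 0 < γ) (hlam : 0 < lam) (hT1 : 0 < T1) (hTn : 0 < Tn)
    (U1 U2 : Vc d → ℝ) (hU1 : ContDiff ℝ (⊤ : ℕ∞) U1) (hU2 : ContDiff ℝ (⊤ : ℕ∞) U2)
    (μ : Measure (Phs (n+2) d)) [IsProbabilityMeasure μ]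
    (hΦint : ∀ j : ℕ, j ≤ n + 2 → Integrable (heatFlow lam U2 j) μ)
    (hLHint : ∀ k : ℕ, k ≤ n + 1 →
      Integrable (gen γ lam T1 Tn U1 U2 (Hloc U1 U2 k)) μ)
    (hinv : ∀ k : ℕ, k ≤ n + 1 →
      ∫ x, gen γ lam T1 Tn U1 U2 (Hloc U1 U2 k) x ∂μ = 0) :
    (∀ j : ℕ, j ≤ n + 2 →
        ∫ x, heatFlow lam U2 j x ∂μ = ∫ x, heatFlow lam U2 0 x ∂μ)
      ∧ ∀ j j' : ℕ, j ≤ n + 2 → j' ≤ n + 2 →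
        ∫ x, sigmaEP lam T1 Tn U2 j x ∂μ = ∫ x, sigmaEP lam T1 Tn U2 j' x ∂μ := by
  have hd1 : Differentiable ℝ U1 := hU1.differentiable (by simp)
  have hd2 : Differentiable ℝ U2 := hU2.differentiable (by simp)
  have main : ∀ j : ℕ, j ≤ n + 2 →
        ∫ x, heatFlow lam U2 j x ∂μ = ∫ x, heatFlow lam U2 0 x ∂μ := by
    intro j
    induction j with
    | zero => intro _; rfl
    | succ k ih =>
      intro hk
      have h := hinv k (by omega)
      have hg : ∀ x : Phs (n+2) d, gen γ lam T1 Tn U1 U2 (Hloc U1 U2 k) x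
          = heatFlow lam U2 k x - heatFlow lam U2 (k+1) x :=
        fun x => gen_Hloc γ lam T1 Tn U1 U2 hd1 hd2 ⟨k, by omega⟩ x
      simp_rw [hg] at h
      rw [integral_sub (hΦint k (by omega)) (hΦint (k+1) hk)] at h
      rw [← ih (by omega)]
      linarith
  refine ⟨main, fun j j' hj hj' => ?_⟩
  unfold sigmaEP
  rw [integral_const_mul, integral_const_mul, main j hj, main j' hj']

end
end

section
/- Let (X,Σ) be a measurable space, κ a Markov kernel on X, μ a probability measure on X, W : X → ℝ measurable with W ≥ 1 and M := ∫ W^{3/2} dμ < ∞, and δ ≥ 0. Assume that W is κ(x,·)-integrable for every x and that for every measurable h : X → ℝ with |h| ≤ W pointwise one has |∫ h dκ(x,·) − ∫ h dμ| ≤ δ W(x) for every x ∈ X. Then for all measurable f, g : X → ℝ and constants a, b ≥ 0 with f² ≤ a W and g² ≤ b W pointwise, | ∫ ( ∫ f dκ(x,·) ) g(x) dμ(x) − (∫ f dμ)(∫ g dμ) | ≤ √(ab) · δ · M. -/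
open MeasureTheory ProbabilityTheory

/-- abstract exponential decay of correlations: let κ be a Markov
kernel on X, μ a probability measure, W ≥ 1 measurable with `M = ∫ W^{3/2} dμ`
finite, and δ ≥ 0 such that the weighted total-variation bound
`|∫ h dκ(x,·) − ∫ h dμ| ≤ δ W(x)` holds for all measurable |h| ≤ W. Then for
measurable f, g with `f² ≤ aW`, `g² ≤ bW` (a, b ≥ 0),
`|∫ (∫ f dκ(x,·)) g(x) dμ(x) − (∫f dμ)(∫g dμ)| ≤ √(ab) δ M`. -/
theorem stmt14 {X : Type*} [MeasurableSpace X]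
    (κ : Kernel X X) [IsMarkovKernel κ]
    (μ : Measure X) [IsProbabilityMeasure μ]
    (W : X → ℝ) (hWmeas : Measurable W) (hW1 : ∀ x, 1 ≤ W x)
    (hWM : Integrable (fun x => W x ^ (3/2 : ℝ)) μ)
    (δ : ℝ) (hδ : 0 ≤ δ)
    (hWκ : ∀ x, Integrable W (κ x))
    (hTV : ∀ h : X → ℝ, Measurable h → (∀ x, |h x| ≤ W x) →
      ∀ x, |(∫ y, h y ∂(κ x)) - ∫ y, h y ∂μ| ≤ δ * W x) :
    ∀ (f g : X → ℝ), Measurable f → Measurable g →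
      ∀ a b : ℝ, 0 ≤ a → 0 ≤ b →
        (∀ x, f x ^ 2 ≤ a * W x) → (∀ x, g x ^ 2 ≤ b * W x) →
        |(∫ x, (∫ y, f y ∂(κ x)) * g x ∂μ) - (∫ x, f x ∂μ) * ∫ x, g x ∂μ|
          ≤ Real.sqrt (a * b) * δ * ∫ x, W x ^ (3/2 : ℝ) ∂μ := by
  intro f g hf hg a b ha hb hfa hgb
  have hsW : ∀ x, Real.sqrt (W x) ≤ W x := fun x => by
    rw [Real.sqrt_le_left (by linarith [hW1 x])]
    nlinarith [hW1 x]
  have hW0 : ∀ x, 0 ≤ W x := fun x => by linarith [hW1 x]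
  have h32 : ∀ x, W x ^ (3/2 : ℝ) = W x * Real.sqrt (W x) := fun x => by
    rw [Real.sqrt_eq_rpow, show (3/2 : ℝ) = 1 + 1/2 by norm_num,
      Real.rpow_add (by linarith [hW1 x]), Real.rpow_one]
  have hg' : ∀ x, |g x| ≤ Real.sqrt b * Real.sqrt (W x) := fun x => by
    rw [← Real.sqrt_mul hb]
    exact Real.abs_le_sqrt (hgb x)
  have hf' : ∀ x, |f x| ≤ Real.sqrt a * W x := fun x => by
    refine (Real.abs_le_sqrt (hfa x)).trans ?_
    rw [Real.sqrt_mul ha]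
    exact mul_le_mul_of_nonneg_left (hsW x) (Real.sqrt_nonneg a)
  have hD : ∀ x, |(∫ y, f y ∂(κ x)) - ∫ y, f y ∂μ| ≤ Real.sqrt a * (δ * W x) := by
    intro x
    rcases (Real.sqrt_nonneg a).eq_or_lt with h0 | hpos
    · have hz : ∀ y, f y = 0 := fun y => by
        have := hf' y
        rw [← h0, zero_mul] at this
        exact abs_nonpos_iff.mp this
      simp [hz, ← h0]
    · have key := hTV (fun y => (Real.sqrt a)⁻¹ * f y) (hf.const_mul _) (fun y => by
        rw [abs_mul, abs_of_pos (inv_pos.mpr hpos), inv_mul_le_iff₀ hpos]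
        exact hf' y) x
      rw [integral_const_mul, integral_const_mul, ← mul_sub, abs_mul,
        abs_of_pos (inv_pos.mpr hpos), inv_mul_le_iff₀ hpos] at key
      exact key
  have hFm : StronglyMeasurable (fun x => ∫ y, f y ∂(κ x)) :=
    hf.stronglyMeasurable.integral_kernel
  set m := ∫ y, f y ∂μ with hm
  have hb' : ∀ x, ‖((∫ y, f y ∂(κ x)) - m) * g x‖
      ≤ Real.sqrt (a * b) * δ * W x ^ (3/2 : ℝ) := fun x => by
    rw [Real.norm_eq_abs, abs_mul, h32, Real.sqrt_mul ha]
    calc _ ≤ (Real.sqrt a * (δ * W x)) * (Real.sqrt b * Real.sqrt (W x)) :=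
          mul_le_mul (hD x) (hg' x) (abs_nonneg _)
            (mul_nonneg (Real.sqrt_nonneg _) (mul_nonneg hδ (hW0 x)))
      _ = _ := by ring
  have hI := hWM.const_mul (Real.sqrt (a * b) * δ)
  have hDi : Integrable (fun x => ((∫ y, f y ∂(κ x)) - m) * g x) μ :=
    hI.mono' (((hFm.measurable.sub_const m).mul hg).aestronglyMeasurable)
      (Filter.Eventually.of_forall hb')
  have hgi : Integrable g μ :=
    (hWM.const_mul (Real.sqrt b)).mono' hg.aestronglyMeasurable
      (Filter.Eventually.of_forall fun x => by
        rw [Real.norm_eq_abs, h32]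
        refine (hg' x).trans (mul_le_mul_of_nonneg_left ?_ (Real.sqrt_nonneg b))
        exact le_mul_of_one_le_left (Real.sqrt_nonneg _) (hW1 x))
  have e : (∫ x, (∫ y, f y ∂(κ x)) * g x ∂μ) - m * ∫ x, g x ∂μ
      = ∫ x, ((∫ y, f y ∂(κ x)) - m) * g x ∂μ := by
    rw [sub_eq_iff_eq_add, ← integral_const_mul, ← integral_add hDi (hgi.const_mul m)]
    congr 1
    ext x
    ring
  rw [e, ← integral_const_mul]
  exact norm_integral_le_of_norm_le hI (Filter.Eventually.of_forall hb')
end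

section
/- For every n ≥ 1 and every real polynomial f of degree r ≥ n − 1, the set 𝒰ⁿ = { (q₁,…,qₙ) ∈ ℝⁿ : there exists (q'₁,…,q'ₙ) ∈ ℝⁿ with det[ (f(q'_i − q_j))_{1≤i,j≤n} ] ≠ 0 } is dense in ℝⁿ; i.e. every polynomial of degree at least n − 1 is n-nondegenerate. -/
theorem aux_indep (n : ℕ) (f : Polynomial ℝ) (hf0 : f ≠ 0) (hdeg : n ≤ f.natDegree + 1)
    (q : Fin n → ℝ) (hq : Function.Injective q) (c : Fin n → ℝ)
    (hc : ∀ x, ∑ j, c j * f.eval (x - q j) = 0) : c = 0 := by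
  have hP : ∑ j, Polynomial.C (c j) * Polynomial.taylor (-q j) f = 0 := by
    apply Polynomial.funext
    intro x
    simp only [Polynomial.eval_finsetSum, Polynomial.eval_mul, Polynomial.eval_C,
      Polynomial.taylor_eval, Polynomial.eval_zero]
    simpa [sub_eq_add_neg] using hc x
  have hs : ∀ k, k ≤ f.natDegree → ∑ j, c j * (-q j) ^ k = 0 := by
    intro k
    induction k using Nat.strong_induction_on with
    | _ k ih =>
      intro hk
      have h1 : ∑ j, c j * (Polynomial.hasseDeriv (f.natDegree - k) f).eval (-q j) = 0 := by
        have := congrArg (fun p => Polynomial.coeff p (f.natDegree - k)) hP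
        simpa [Polynomial.finsetSum_coeff, Polynomial.taylor_coeff] using this
      have hd : (Polynomial.hasseDeriv (f.natDegree - k) f).natDegree < k + 1 := by
        have := Polynomial.natDegree_hasseDeriv_le f (f.natDegree - k)
        omega
      simp_rw [Polynomial.eval_eq_sum_range' hd, Finset.mul_sum] at h1
      rw [Finset.sum_comm, Finset.sum_range_succ, Finset.sum_eq_zero, zero_add] at h1
      · have h2 : (Polynomial.hasseDeriv (f.natDegree - k) f).coeff k
            * ∑ j, c j * (-q j) ^ k = 0 := by
          rw [← h1, Finset.mul_sum]
          exact Finset.sum_congr rfl fun j _ => by ring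
        refine (mul_eq_zero.mp h2).resolve_left ?_
        rw [Polynomial.hasseDeriv_coeff, Nat.add_sub_cancel' hk]
        refine mul_ne_zero ?_ (Polynomial.leadingCoeff_ne_zero.mpr hf0)
        exact_mod_cast (Nat.choose_pos (Nat.sub_le _ _)).ne'
      · intro i hi
        have hi := Finset.mem_range.mp hi
        have h3 := ih i hi (by omega)
        have : ∑ j, c j * ((Polynomial.hasseDeriv (f.natDegree - k) f).coeff i * (-q j) ^ i)
            = (Polynomial.hasseDeriv (f.natDegree - k) f).coeff i * ∑ j, c j * (-q j) ^ i := by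
          rw [Finset.mul_sum]
          exact Finset.sum_congr rfl fun j _ => by ring
        rw [this, h3, mul_zero]
  refine Matrix.eq_zero_of_forall_pow_sum_mul_pow_eq_zero (f := fun j => -q j) ?_ ?_
  · exact neg_injective.comp hq
  · intro i
    exact hs i (by have := i.2; omega)

theorem aux_points (n : ℕ) (g : ℝ → Fin n → ℝ)
    (hg : ∀ c : Fin n → ℝ, (∀ x, ∑ j, c j * g x j = 0) → c = 0) :
    ∃ x : Fin n → ℝ, Matrix.det (Matrix.of fun i j => g (x i) j) ≠ 0 := by
  have hspan : Submodule.span ℝ (Set.range g) = ⊤ := by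
    by_contra h
    obtain ⟨φ, hφ, hle⟩ := Submodule.exists_le_ker_of_lt_top _ (lt_top_iff_ne_top.mpr h)
    apply hφ
    have hrep : ∀ v : Fin n → ℝ, φ v = ∑ j, φ (Pi.single j 1) * v j := by
      intro v
      rw [LinearMap.pi_apply_eq_sum_univ φ v]
      refine Finset.sum_congr rfl fun j _ => ?_
      rw [smul_eq_mul, mul_comm]
      congr 2
      ext i
      simp [Pi.single_apply, eq_comm]
    have h0 := hg (fun j => φ (Pi.single j 1)) (fun x => by
      rw [← hrep]
      exact hle (Submodule.subset_span ⟨x, rfl⟩))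
    ext v
    simpa using congrFun h0 v
  obtain ⟨b, hb, -, hli⟩ := Submodule.exists_fun_fin_finrank_span_eq ℝ (Set.range g)
  have hfr : Module.finrank ℝ (Submodule.span ℝ (Set.range g)) = n := by
    rw [hspan]; simp
  choose x hx using hb
  refine ⟨fun i => x (Fin.cast hfr.symm i), ?_⟩
  rw [← isUnit_iff_ne_zero, ← Matrix.isUnit_iff_isUnit_det,
    ← Matrix.linearIndependent_rows_iff_isUnit]
  have := hli.comp (Fin.cast hfr.symm) (Fin.cast_injective _)
  have heq : (Matrix.of fun i j => g (x (Fin.cast hfr.symm i)) j).row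
      = b ∘ Fin.cast hfr.symm := funext fun i => hx _
  rw [heq]
  exact this

/-- every real polynomial of degree ≥ n−1 is n-nondegenerate:
the set 𝒰ⁿ = {q ∈ ℝⁿ : ∃ q' ∈ ℝⁿ, det[(f(q'ᵢ − qⱼ))ᵢⱼ] ≠ 0} is dense in ℝⁿ. -/
theorem stmt18 (n : ℕ) (hn : 1 ≤ n) (f : Polynomial ℝ)
    (hdeg : ((n - 1 : ℕ) : WithBot ℕ) ≤ f.degree) :
    Dense {q : Fin n → ℝ | ∃ q' : Fin n → ℝ,
      Matrix.det (Matrix.of fun i j : Fin n => f.eval (q' i - q j)) ≠ 0} := by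
  have hf0 : f ≠ 0 := by
    rintro rfl
    simp at hdeg
  have hnd : n ≤ f.natDegree + 1 := by
    have := Polynomial.le_natDegree_of_coe_le_degree hdeg
    omega
  intro q
  have ht : Filter.Tendsto (fun t : ℝ => fun i : Fin n => q i + t * (i : ℕ))
      (nhdsWithin 0 {0}ᶜ) (nhds q) := by
    have hcont : Continuous (fun t : ℝ => fun i : Fin n => q i + t * (i : ℕ)) := by fun_prop
    have := hcont.tendsto 0
    simp only [zero_mul, add_zero] at this
    exact this.mono_left nhdsWithin_le_nhds
  refine mem_closure_of_tendsto ht ?_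
  have hinj : ∀ᶠ t : ℝ in nhdsWithin 0 {0}ᶜ, ∀ i j : Fin n, i ≠ j →
      q i + t * (i : ℕ) ≠ q j + t * (j : ℕ) := by
    simp only [Filter.eventually_all]
    intro i j hij
    have hij' : ((i : ℕ) : ℝ) - (j : ℕ) ≠ 0 := by
      rw [sub_ne_zero]
      exact_mod_cast fun h => hij (Fin.ext h)
    by_cases hq : q i = q j
    · filter_upwards [self_mem_nhdsWithin] with t ht h
      apply mul_ne_zero ht hij'
      rw [hq] at h
      linarith
    · apply Filter.Eventually.filter_mono nhdsWithin_le_nhds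
      have hc1 : ContinuousAt (fun t : ℝ => q i + t * (i : ℕ)) 0 := by fun_prop
      have hc2 : ContinuousAt (fun t : ℝ => q j + t * (j : ℕ)) 0 := by fun_prop
      have := (hc1.sub hc2).eventually_ne (y := 0) (by simpa [sub_eq_zero] using hq)
      filter_upwards [this] with t ht
      exact sub_ne_zero.mp ht
  filter_upwards [hinj] with t h
  exact aux_points n (fun x j => f.eval (x - (q j + t * (j : ℕ))))
    fun c hc => aux_indep n f hf0 hnd _
      (fun i j hij => by_contra fun hne => h i j hne hij) c hc
end
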